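/- arXiv:2508.17147 — 3 statements merged into one kernel-verified Lean document; each statement's English description precedes it below -/
import Mathlib

section
/- Let Δ : ℤ → ℝ with Δ_j > 0 for all j (the length of the element [x_j, x_{j+1}]), and let u⁺, u⁻ : ℤ → ℝ be finitely supported sequences (u_j⁺ is the value at node j produced by the element [x_j, x_{j+1}], and u_j⁻ the value at node j produced by [x_{j−1}, x_j]). Define the projected nodal values u_j := (Δ_j u_j⁺ + Δ_{j−1} u_j⁻)/(Δ_j + Δ_{j−1}). Then Σ_{j∈ℤ} (Δ_j + Δ_{j−1}) u_j² ≤ Σ_{j∈ℤ} Δ_j ((u_j⁺)² + (u_{j+1}⁻)²); i.e. the averaging projection from the discontinuous dG nodal values to the continuous PAMPA nodal values is energy stable. -/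
/-!
Since `t ↦ t²` is convex, Jensen's inequality at a node bounds the energy of the length-weighted
mean by `Δ_j (u_j⁺)² + Δ_{j-1} (u_j⁻)²`. The sum of these nodal bounds is the sum of the element
energies: shifting `j` by one moves `u_j⁻` back to the element that produced it. Any nonnegative
convex entropy can take the place of the square.
-/

section Convexity

variable {𝕜 E β : Type*} [Field 𝕜] [LinearOrder 𝕜] [IsStrictOrderedRing 𝕜]
  [AddCommMonoid E] [Module 𝕜 E]
  [AddCommMonoid β] [PartialOrder β] [Module 𝕜 β] [PosSMulMono 𝕜 β]

theorem add_smul_map_div_smul_add_div_smul_le {s : Set E} {f : E → β} (hf : ConvexOn 𝕜 s f)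
    {x y : E} (hx : x ∈ s) (hy : y ∈ s) {a b : 𝕜} (ha : 0 ≤ a) (hb : 0 ≤ b) (hab : 0 < a + b) :
    (a + b) • f ((a / (a + b)) • x + (b / (a + b)) • y) ≤ a • f x + b • f y :=
  calc
    (a + b) • f ((a / (a + b)) • x + (b / (a + b)) • y)
        ≤ (a + b) • ((a / (a + b)) • f x + (b / (a + b)) • f y) :=
      smul_le_smul_of_nonneg_left ((convexOn_iff_div.mp hf).2 hx hy ha hb hab) hab.le
    _ = a • f x + b • f y := by
      simp only [smul_add, smul_smul, mul_div_cancel₀ _ hab.ne']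

end Convexity

theorem hasSum_add_of_summable_add_perm {ι : Type*} (e : Equiv.Perm ι) {f g : ι → ℝ}
    (hf : ∀ i, 0 ≤ f i) (hg : ∀ i, 0 ≤ g i) (hfg : Summable fun i ↦ f i + g (e i)) :
    HasSum (fun i ↦ f i + g i) (∑' i, (f i + g (e i))) := by
  have hf_sum : Summable f := hfg.of_nonneg_of_le hf fun i ↦ le_add_of_nonneg_right (hg (e i))
  have hge_sum : Summable (g ∘ e) :=
    hfg.of_nonneg_of_le (fun i ↦ hg (e i)) fun i ↦ le_add_of_nonneg_left (hf i)
  have hg_sum : Summable g := e.summable_iff.mp hge_sum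
  have h_tsum : ∑' i, (f i + g (e i)) = ∑' i, f i + ∑' i, g i := by
    rw [← e.tsum_eq g]
    exact hf_sum.tsum_add hge_sum
  rw [h_tsum]
  exact hf_sum.hasSum.add hg_sum.hasSum

theorem hasSum_nodal_of_summable_element {Δ p q : ℤ → ℝ} (hΔ : ∀ j, 0 ≤ Δ j)
    (hp : ∀ j, 0 ≤ p j) (hq : ∀ j, 0 ≤ q j) (hpq : Summable fun j ↦ Δ j * (p j + q (j + 1))) :
    HasSum (fun j ↦ Δ j * p j + Δ (j - 1) * q j) (∑' j, Δ j * (p j + q (j + 1))) := by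
  have h_shift (j : ℤ) : Δ j * (p j + q (j + 1)) =
      Δ j * p j + Δ (Equiv.addRight 1 j - 1) * q (Equiv.addRight 1 j) := by
    simp only [Equiv.coe_addRight, add_sub_cancel_right, mul_add]
  simp only [h_shift] at hpq ⊢
  exact hasSum_add_of_summable_add_perm (Equiv.addRight 1) (f := fun j ↦ Δ j * p j)
    (g := fun j ↦ Δ (j - 1) * q j) (fun j ↦ mul_nonneg (hΔ j) (hp j))
    (fun j ↦ mul_nonneg (hΔ (j - 1)) (hq j)) hpq

theorem summable_element_of_finite_support {E : Type*} [Zero E] (Δ : ℤ → ℝ) {f : E → ℝ}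
    (hf_zero : f 0 = 0) {uplus uminus : ℤ → E} (hplus : uplus.support.Finite)
    (hminus : uminus.support.Finite) :
    Summable fun j ↦ Δ j * (f (uplus j) + f (uminus (j + 1))) := by
  have hminus_shift : (fun j ↦ uminus (j + 1)).HasFiniteSupport :=
    .comp_of_injective (add_left_injective 1) hminus
  have h_support : (fun j ↦ f (uplus j) + f (uminus (j + 1))).HasFiniteSupport :=
    .fun_add (.fun_comp hplus hf_zero) (hminus_shift.fun_comp hf_zero)
  exact summable_of_hasFiniteSupport (h_support.mul_right Δ)

section Projection

variable {E : Type*} [AddCommGroup E] [Module ℝ E]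

/-- The projection from the discontinuous dG nodal values to the continuous PAMPA nodal values: the
length-weighted mean of the value `uplus j` at node `j` from the element `[x_j, x_{j+1}]`, of length
`Δ j`, and the value `uminus j` from `[x_{j-1}, x_j]`, of length `Δ (j - 1)`. The values may lie in
any real vector space, as for systems of conservation laws. -/
noncomputable def pampaProjection (Δ : ℤ → ℝ) (uplus uminus : ℤ → E) (j : ℤ) : E :=
  (Δ j / (Δ j + Δ (j - 1))) • uplus j + (Δ (j - 1) / (Δ j + Δ (j - 1))) • uminus j

theorem pampaProjection_eq_div (Δ uplus uminus : ℤ → ℝ) (j : ℤ) :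
    pampaProjection Δ uplus uminus j =
      (Δ j * uplus j + Δ (j - 1) * uminus j) / (Δ j + Δ (j - 1)) := by
  simp only [pampaProjection, smul_eq_mul, div_mul_eq_mul_div, add_div]

theorem pampaProjection_mem {s : Set E} (hs : Convex ℝ s) {Δ : ℤ → ℝ} (hΔ : ∀ j, 0 < Δ j)
    {uplus uminus : ℤ → E} {j : ℤ} (hplus : uplus j ∈ s) (hminus : uminus j ∈ s) :
    pampaProjection Δ uplus uminus j ∈ s :=
  convex_iff_div.mp hs hplus hminus (hΔ j).le (hΔ (j - 1)).le (add_pos (hΔ j) (hΔ (j - 1)))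

theorem add_mul_map_pampaProjection_le {s : Set E} {η : E → ℝ} (hη : ConvexOn ℝ s η)
    {Δ : ℤ → ℝ} (hΔ : ∀ j, 0 < Δ j) {uplus uminus : ℤ → E} {j : ℤ}
    (hplus : uplus j ∈ s) (hminus : uminus j ∈ s) :
    (Δ j + Δ (j - 1)) * η (pampaProjection Δ uplus uminus j) ≤
      Δ j * η (uplus j) + Δ (j - 1) * η (uminus j) :=
  add_smul_map_div_smul_add_div_smul_le hη hplus hminus (hΔ j).le (hΔ (j - 1)).le
    (add_pos (hΔ j) (hΔ (j - 1)))

theorem pampa_projection_energy_stable_general {s : Set E} {η : E → ℝ} (hη : ConvexOn ℝ s η)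
    (hη_nonneg : ∀ x ∈ s, 0 ≤ η x) {Δ : ℤ → ℝ} (hΔ : ∀ j, 0 < Δ j) {uplus uminus : ℤ → E}
    (hplus : ∀ j, uplus j ∈ s) (hminus : ∀ j, uminus j ∈ s)
    (h_energy : Summable fun j ↦ Δ j * (η (uplus j) + η (uminus (j + 1)))) :
    Summable (fun j ↦ (Δ j + Δ (j - 1)) * η (pampaProjection Δ uplus uminus j)) ∧
      ∑' j, (Δ j + Δ (j - 1)) * η (pampaProjection Δ uplus uminus j) ≤
        ∑' j, Δ j * (η (uplus j) + η (uminus (j + 1))) := by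
  have h_jensen (j : ℤ) : (Δ j + Δ (j - 1)) * η (pampaProjection Δ uplus uminus j) ≤
      Δ j * η (uplus j) + Δ (j - 1) * η (uminus j) :=
    add_mul_map_pampaProjection_le hη hΔ (hplus j) (hminus j)
  have h_nodal : HasSum (fun j ↦ Δ j * η (uplus j) + Δ (j - 1) * η (uminus j))
      (∑' j, Δ j * (η (uplus j) + η (uminus (j + 1)))) :=
    hasSum_nodal_of_summable_element (fun j ↦ (hΔ j).le) (fun j ↦ hη_nonneg _ (hplus j))
      (fun j ↦ hη_nonneg _ (hminus j)) h_energy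
  have h_nonneg (j : ℤ) : 0 ≤ (Δ j + Δ (j - 1)) * η (pampaProjection Δ uplus uminus j) :=
    mul_nonneg (add_pos (hΔ j) (hΔ (j - 1))).le
      (hη_nonneg _ (pampaProjection_mem hη.1 hΔ (hplus j) (hminus j)))
  have h_summable := h_nodal.summable.of_nonneg_of_le h_nonneg h_jensen
  exact ⟨h_summable, hasSum_le h_jensen h_summable.hasSum h_nodal⟩

end Projection

/-- Energy stability of the averaging projection from the discontinuous dG nodal
values to the continuous PAMPA nodal values (Proposition 3.1):
with `u_j = (Δ_j u_j⁺ + Δ_{j−1} u_j⁻)/(Δ_j + Δ_{j−1})`,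
`Σ_j (Δ_j + Δ_{j−1}) u_j² ≤ Σ_j Δ_j ((u_j⁺)² + (u_{j+1}⁻)²)`. -/
theorem pampa_projection_energy_stable
    (Δ : ℤ → ℝ) (hΔ : ∀ j, 0 < Δ j)
    (uplus uminus : ℤ → ℝ)
    (hplus : (Function.support uplus).Finite)
    (hminus : (Function.support uminus).Finite) :
    (∑' j : ℤ, (Δ j + Δ (j - 1)) *
        ((Δ j * uplus j + Δ (j - 1) * uminus j) / (Δ j + Δ (j - 1)))^2) ≤
      ∑' j : ℤ, Δ j * ((uplus j)^2 + (uminus (j + 1))^2) := by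
  have h_energy : Summable fun j ↦ Δ j * (uplus j ^ 2 + uminus (j + 1) ^ 2) :=
    summable_element_of_finite_support Δ (f := (· ^ 2)) (zero_pow two_ne_zero) hplus hminus
  simpa only [pampaProjection_eq_div] using
    (pampa_projection_energy_stable_general (η := (· ^ 2)) even_two.convexOn_pow
      (fun x _ ↦ sq_nonneg x) hΔ (fun _ ↦ Set.mem_univ _) (fun _ ↦ Set.mem_univ _) h_energy).2
end

section
/- Fix Δx > 0. For finitely supported sequences p, a : ℤ → ℝ (p_j ≈ point value at node x_j, a_j ≈ cell average on [x_j, x_{j+1}]), define the periodic PAMPA derivative operator D̃ by (D̃(p,a))_point at j = (p_{j−1} − 3a_{j−1} + 3a_j − p_{j+1})/Δx and (D̃(p,a))_average at j = (p_{j+1} − p_j)/Δx, and the diagonal mass weights Δx/4 at each point index and 3Δx/4 at each average index. Then the bilinear form B((p,a),(p′,a′)) := Σ_{j∈ℤ} [ (Δx/4)·(D̃(p,a))_point,j · p′_j + (3Δx/4)·(D̃(p,a))_avg,j · a′_j ] is skew-symmetric: B(w, w′) + B(w′, w) = 0 for all finitely supported w = (p,a), w′ = (p′,a′). In particular B(w,w)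 = 0, i.e. M̃D̃ + (M̃D̃)ᵀ = 0 (a periodic SBP operator). -/
/-- Point-value component of the periodic PAMPA derivative operator. -/
noncomputable def pampaDPoint (Δx : ℝ) (p a : ℤ → ℝ) (j : ℤ) : ℝ :=
  (p (j - 1) - 3 * a (j - 1) + 3 * a j - p (j + 1)) / Δx

/-- Average component of the periodic PAMPA derivative operator. -/
noncomputable def pampaDAvg (Δx : ℝ) (p : ℤ → ℝ) (j : ℤ) : ℝ :=
  (p (j + 1) - p j) / Δx

/-- The bilinear form `B((p,a),(p′,a′)) = Σ_j [ (Δx/4)·(D̃w)_point,j·p′_j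
+ (3Δx/4)·(D̃w)_avg,j·a′_j ]` associated with `M̃ D̃`. -/
noncomputable def pampaBilin (Δx : ℝ) (p a p' a' : ℤ → ℝ) : ℝ :=
  ∑' j : ℤ, ((Δx / 4) * pampaDPoint Δx p a j * p' j +
    (3 * Δx / 4) * pampaDAvg Δx p j * a' j)

/-!
The mesh width cancels between the weights of `M̃` and the difference quotients of `D̃`, so the
summands of the bilinear form are combinations of products of neighbouring degrees of freedom. Since
`M̃` weighs averages three times as much as points, the factor `3` in front of the averages in the
point update is matched, and the product rule
`(a j - a (j - 1)) * p' j + (p' (j + 1) - p' j) * a j = a j * p' (j + 1) - a (j - 1) * p' j`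
turns the symmetrization of the summand into a discrete divergence `F j - F (j + 1)`, whose sum over
`ℤ` vanishes.
-/

/-- `f` and `g` have convergent cross-correlations `∑ x, f (x + k) * g x` at every lag `k`. This is
the joint decay needed to sum by parts on `ℤ`; it holds for two real sequences in `ℓ²`, and for any
sequence paired with a finitely supported one. -/
def SummableCorrelations {G R : Type*} [Add G] [Mul R] [AddCommMonoid R] [TopologicalSpace R]
    (f g : G → R) : Prop :=
  ∀ k, Summable fun x => f (x + k) * g x

namespace SummableCorrelations

theorem of_finite_support_right {G R : Type*} [Add G] [NonUnitalNonAssocSemiring R]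
    [TopologicalSpace R] (f : G → R) {g : G → R} (hg : (Function.support g).Finite) :
    SummableCorrelations f g := fun k =>
  summable_of_hasFiniteSupport (hg.subset (Function.support_mul_subset_right (f <| · + k) g))

theorem symm {G R : Type*} [AddGroup G] [NonUnitalNonAssocCommSemiring R] [TopologicalSpace R]
    {f g : G → R} (h : SummableCorrelations f g) : SummableCorrelations g f := fun k => by
  rw [← (Equiv.addRight (-k)).summable_iff]
  simpa [Function.comp_def, mul_comm] using h (-k)

end SummableCorrelations

theorem tsum_sub_comp_perm_eq_zero {ι R : Type*} [AddCommGroup R] [TopologicalSpace R]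
    [IsTopologicalAddGroup R] [T2Space R] {f : ι → R} (hf : Summable f) (σ : Equiv.Perm ι) :
    ∑' i, (f i - f (σ i)) = 0 := by
  have hfσ : Summable fun i => f (σ i) := σ.summable_iff.mpr hf
  rw [hf.tsum_sub hfσ, σ.tsum_eq f, sub_self]

/-- The density of the bilinear form `pampaBilin`, grouping the node `x_j` with the cell
`[x_j, x_{j+1}]` to its right. -/
noncomputable def pampaDensity (Δx : ℝ) (p a p' a' : ℤ → ℝ) (j : ℤ) : ℝ :=
  (Δx / 4) * pampaDPoint Δx p a j * p' j + (3 * Δx / 4) * pampaDAvg Δx p j * a' j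

/-- The flux at the node `x_j` whose discrete divergence is the symmetrization of
`pampaDensity`; it does not depend on the mesh width. -/
noncomputable def pampaFlux (p a p' a' : ℤ → ℝ) (j : ℤ) : ℝ :=
  ((p (j - 1) - 3 * a (j - 1)) * p' j + (p' (j - 1) - 3 * a' (j - 1)) * p j) / 4

section

variable {Δx : ℝ} {p a p' a' : ℤ → ℝ}

theorem pampaDensity_eq (hΔx : Δx ≠ 0) (j : ℤ) :
    pampaDensity Δx p a p' a' j =
      ((p (j - 1) - 3 * a (j - 1) + 3 * a j - p (j + 1)) * p' j +
        3 * (p (j + 1) - p j) * a' j) / 4 := by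
  unfold pampaDensity pampaDPoint pampaDAvg
  field_simp

theorem pampaDensity_add_swap (hΔx : Δx ≠ 0) (j : ℤ) :
    pampaDensity Δx p a p' a' j + pampaDensity Δx p' a' p a j =
      pampaFlux p a p' a' j - pampaFlux p a p' a' (j + 1) := by
  simp only [pampaDensity_eq hΔx, pampaFlux, add_sub_cancel_right]
  ring

theorem summable_pampaDensity (hΔx : Δx ≠ 0) (hpp : SummableCorrelations p p')
    (hpa : SummableCorrelations p a') (hap : SummableCorrelations a p') :
    Summable (pampaDensity Δx p a p' a') := by
  have point : Summable fun j =>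
      p (j + -1) * p' j - 3 * (a (j + -1) * p' j) + 3 * (a (j + 0) * p' j) - p (j + 1) * p' j :=
    (((hpp (-1)).sub ((hap (-1)).mul_left 3)).add ((hap 0).mul_left 3)).sub (hpp 1)
  have average : Summable fun j => 3 * (p (j + 1) * a' j - p (j + 0) * a' j) :=
    ((hpa 1).sub (hpa 0)).mul_left 3
  refine ((point.add average).div_const 4).congr fun j => ?_
  rw [pampaDensity_eq hΔx, add_zero, ← sub_eq_add_neg]
  ring

theorem summable_pampaFlux (hpp : SummableCorrelations p p')
    (hpa : SummableCorrelations p a') (hap : SummableCorrelations a p') :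
    Summable (pampaFlux p a p' a') := by
  have forward : Summable fun j => p (j + -1) * p' j - 3 * (a (j + -1) * p' j) :=
    (hpp (-1)).sub ((hap (-1)).mul_left 3)
  have backward : Summable fun j => p' (j + -1) * p j - 3 * (a' (j + -1) * p j) :=
    (hpp.symm (-1)).sub ((hpa.symm (-1)).mul_left 3)
  refine ((forward.add backward).div_const 4).congr fun j => ?_
  rw [pampaFlux, ← sub_eq_add_neg]
  ring

theorem pampa_periodic_sbp_general (hΔx : Δx ≠ 0) (hpp : SummableCorrelations p p')
    (hpa : SummableCorrelations p a') (hap : SummableCorrelations a p') :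
    pampaBilin Δx p a p' a' + pampaBilin Δx p' a' p a = 0 :=
  calc
    pampaBilin Δx p a p' a' + pampaBilin Δx p' a' p a
    _ = ∑' j, (pampaDensity Δx p a p' a' j + pampaDensity Δx p' a' p a j) :=
      ((summable_pampaDensity hΔx hpp hpa hap).tsum_add
        (summable_pampaDensity hΔx hpp.symm hap.symm hpa.symm)).symm
    _ = ∑' j, (pampaFlux p a p' a' j - pampaFlux p a p' a' (j + 1)) :=
      tsum_congr (pampaDensity_add_swap hΔx)
    _ = 0 := tsum_sub_comp_perm_eq_zero (summable_pampaFlux hpp hpa hap) (Equiv.addRight 1)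

end

/-- The periodic PAMPA operator is a periodic SBP operator: the bilinear form of
`M̃ D̃` is skew-symmetric on finitely supported states, so `M̃D̃ + (M̃D̃)ᵀ = 0`;
in particular `B(w,w) = 0`. -/
theorem pampa_periodic_sbp (Δx : ℝ) (hΔx : 0 < Δx)
    (p a p' a' : ℤ → ℝ)
    (hp : (Function.support p).Finite) (ha : (Function.support a).Finite)
    (hp' : (Function.support p').Finite) (ha' : (Function.support a').Finite) :
    pampaBilin Δx p a p' a' + pampaBilin Δx p' a' p a = 0 ∧
    pampaBilin Δx p a p a = 0 :=
  ⟨pampa_periodic_sbp_general hΔx.ne' (.of_finite_support_right p hp')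
      (.of_finite_support_right p ha') (.of_finite_support_right a hp'),
    add_self_eq_zero.mp <| pampa_periodic_sbp_general hΔx.ne' (.of_finite_support_right p hp)
      (.of_finite_support_right p ha) (.of_finite_support_right a hp)⟩
end

section
/- Fix Δx > 0 and a uniform grid x_j = j·Δx (j ∈ ℤ). For every real polynomial q of degree at most 2 and every j ∈ ℤ, the central PAMPA point stencil is exact: (1/Δx)·( q(x_{j−1}) − 3·ā_{j−1} + 3·ā_j − q(x_{j+1}) ) = q′(x_j), where ā_j := (1/Δx)·∫_{x_j}^{x_{j+1}} q(x) dx is the exact cell average of q on [x_j, x_{j+1}]. -/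
open MeasureTheory Polynomial

/-!
The stencil sees `f` only through its central differences `f (x + t) - f (x - t)`: the point values
contribute the one at `t = h`, and the two cell averages contribute the mean over `t` from `0` to
`h`. For a quadratic these differences are `2 * t * f' x`, so the bracket in the stencil equals
`-2 * h * f' x + 3 * h * f' x = h * f' x`.
-/

theorem eval_add_sub_eval_sub_of_degree_le_two {R : Type*} [CommRing R] {q : R[X]}
    (hq : q.degree ≤ 2) (x t : R) :
    q.eval (x + t) - q.eval (x - t) = 2 * t * q.derivative.eval x := by
  rw [eq_quadratic_of_degree_le_two hq]
  simp only [eval_add, eval_mul, eval_C, eval_pow, eval_X, derivative_add, derivative_C_mul,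
    derivative_X_sq, derivative_X, derivative_C, eval_one, eval_zero]
  ring

section CentralStencil

variable {E : Type*} [NormedAddCommGroup E] [NormedSpace ℝ E]

/-- The central PAMPA point stencil at `x` with mesh size `h`, formed from the values of `f` at
`x - h` and `x + h` and its averages over the two cells adjacent to `x`. It is the scheme's
approximation of `deriv f x`. Values lie in a normed space so as to cover systems of equations. -/
noncomputable def pampaCentralStencil (f : ℝ → E) (x h : ℝ) : E :=
  h⁻¹ • (f (x - h) - (3 : ℝ) • (⨍ y in (x - h)..x, f y)
    + (3 : ℝ) • (⨍ y in x..(x + h), f y) - f (x + h))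

variable [CompleteSpace E] {f : ℝ → E} {x h : ℝ} {d : E}

theorem integral_sub_integral_of_central_difference_eq
    (hf : IntervalIntegrable f volume x (x + h))
    (hd : ∀ t ∈ Set.uIcc 0 h, f (x + t) - f (x - t) = (2 * t) • d) :
    (∫ y in x..(x + h), f y) - (∫ y in (x - h)..x, f y) = h ^ 2 • d := by
  have hf_shift : IntervalIntegrable (fun t ↦ f (x + t)) volume 0 h := by
    simpa only [sub_self, add_sub_cancel_left] using hf.comp_add_left x
  have linear_integrable : IntervalIntegrable (fun t : ℝ ↦ (2 * t) • d) volume 0 h :=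
    Continuous.intervalIntegrable (by fun_prop) 0 h
  have integral_linear : ∫ t in 0..h, (2 * t) • d = h ^ 2 • d := by
    rw [intervalIntegral.integral_smul_const, intervalIntegral.integral_const_mul, integral_id]
    congr 1
    ring
  have reflected : ∫ y in (x - h)..x, f y = (∫ y in x..(x + h), f y) - h ^ 2 • d :=
    calc ∫ y in (x - h)..x, f y
        = ∫ t in 0..h, f (x - t) := by
          rw [intervalIntegral.integral_comp_sub_left, sub_zero]
      _ = ∫ t in 0..h, (f (x + t) - (2 * t) • d) :=
          intervalIntegral.integral_congr fun t ht ↦ by simp only [← hd t ht, sub_sub_cancel]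
      _ = (∫ y in x..(x + h), f y) - h ^ 2 • d := by
          rw [intervalIntegral.integral_sub hf_shift linear_integrable, integral_linear,
            intervalIntegral.integral_comp_add_left, add_zero]
  rw [reflected, sub_sub_cancel]

theorem pampa_central_stencil_exact_general (hh : h ≠ 0)
    (hf : IntervalIntegrable f volume x (x + h))
    (hd : ∀ t ∈ Set.uIcc 0 h, f (x + t) - f (x - t) = (2 * t) • d) :
    pampaCentralStencil f x h = d := by
  have integral_difference := integral_sub_integral_of_central_difference_eq hf hd
  have value_difference := hd h Set.right_mem_uIcc
  calc pampaCentralStencil f x h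
      = h⁻¹ • ((3 * h⁻¹) • ((∫ y in x..(x + h), f y) - ∫ y in (x - h)..x, f y)
          - (f (x + h) - f (x - h))) := by
        rw [pampaCentralStencil, interval_average_eq, interval_average_eq, sub_sub_cancel,
          add_sub_cancel_left]
        module
    _ = (h⁻¹ * (3 * h⁻¹ * h ^ 2 - 2 * h)) • d := by
        rw [integral_difference, value_difference]
        module
    _ = d := by
        have coefficient_eq_one : h⁻¹ * (3 * h⁻¹ * h ^ 2 - 2 * h) = 1 := by
          field_simp
          norm_num
        rw [coefficient_eq_one, one_smul]

end CentralStencil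

/-- Exactness of the central PAMPA point stencil on quadratics: on a uniform grid
`x_j = j·Δx`, for every polynomial `q` of degree at most `2`,
`(1/Δx)·(q(x_{j−1}) − 3ā_{j−1} + 3ā_j − q(x_{j+1})) = q′(x_j)`,
where `ā_j` is the exact cell average of `q` on `[x_j, x_{j+1}]`. -/
theorem pampa_central_stencil_exact (Δx : ℝ) (hΔx : 0 < Δx)
    (q : Polynomial ℝ) (hq : q.degree ≤ 2) (j : ℤ) :
    (1 / Δx) * (q.eval ((j - 1 : ℤ) * Δx)
        - 3 * ((1 / Δx) * ∫ x in ((j - 1 : ℤ) * Δx)..((j : ℤ) * Δx), q.eval x)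
        + 3 * ((1 / Δx) * ∫ x in ((j : ℤ) * Δx)..((j + 1 : ℤ) * Δx), q.eval x)
        - q.eval ((j + 1 : ℤ) * Δx)) =
      (Polynomial.derivative q).eval ((j : ℤ) * Δx) := by
  simpa [pampaCentralStencil, interval_average_eq, sub_mul, add_mul] using
    pampa_central_stencil_exact_general hΔx.ne' (q.continuous.intervalIntegrable _ _)
      fun t _ ↦ eval_add_sub_eval_sub_of_degree_le_two hq (j * Δx) t
end
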